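/- Let E, K ⊆ ℝ^{N×n} with E compact and K bounded. Assume condition (H): for every δ > 0 there exists L = L(δ, E, K) ∈ ℕ such that for every ξ ∈ int K \ B_δ(E) there exist matrices η_1,…,η_J ∈ ℝ^{N×n}, J ∈ ℕ, J ≤ L, with rank(η_j) = 1 for j = 1,…,J, such that the segment [ξ+η_1+…+η_{j−1}−η_j, ξ+η_1+…+η_{j−1}+η_j] is contained in int K for every j = 1,…,J, and ξ+η_1+…+η_J ∈ B_δ(E). Then int K has the relaxation property with respect to E. -/

import Mathlib

open MeasureTheory Filter

attribute [local instance] Classical.propDecidable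
attribute [local instance] Matrix.frobeniusNormedAddCommGroup Matrix.frobeniusNormedSpace

noncomputable section

/-- The space of real `N × n` matrices. -/
abbrev Mat (N n : ℕ) : Type := Matrix (Fin N) (Fin n) ℝ

/-- A function `f : ℝ^{N×n} → ℝ` is rank one convex. -/
def RankOneConvexFun {N n : ℕ} (f : Mat N n → ℝ) : Prop :=
  ∀ lam ∈ Set.Icc (0:ℝ) 1, ∀ ξ η : Mat N n, (ξ - η).rank = 1 →
    f (lam • ξ + (1 - lam) • η) ≤ lam * f ξ + (1 - lam) * f η

/-- The hull `Rco_f E`. -/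
def RcoF {N n : ℕ} (E : Set (Mat N n)) : Set (Mat N n) :=
  {ξ | ∀ f : Mat N n → ℝ, RankOneConvexFun f → (∀ η ∈ E, f η ≤ 0) → f ξ ≤ 0}

/-- A set of matrices is rank one convex. -/
def RankOneConvexSet {N n : ℕ} (S : Set (Mat N n)) : Prop :=
  ∀ A ∈ S, ∀ B ∈ S, (A - B).rank = 1 → ∀ t ∈ Set.Icc (0:ℝ) 1, t • A + (1 - t) • B ∈ S

/-- The property `(H_I(U))`, phrased on lists of (weight, matrix) pairs. -/
inductive HIProp {N n : ℕ} (U : Set (Mat N n)) : List (ℝ × Mat N n) → Prop where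
  | single (l : ℝ) (ξ : Mat N n) (hξ : ξ ∈ U) : HIProp U [(l, ξ)]
  | pair (l₁ l₂ : ℝ) (ξ₁ ξ₂ : Mat N n) (h₁ : ξ₁ ∈ U) (h₂ : ξ₂ ∈ U)
      (hrank : (ξ₁ - ξ₂).rank = 1) : HIProp U [(l₁, ξ₁), (l₂, ξ₂)]
  | step (L rest : List (ℝ × Mat N n)) (l₁ l₂ : ℝ) (ξ₁ ξ₂ : Mat N n)
      (hperm : L.Perm ((l₁, ξ₁) :: (l₂, ξ₂) :: rest)) (hrest : rest ≠ [])
      (h₁ : ξ₁ ∈ U) (h₂ : ξ₂ ∈ U) (hrank : (ξ₁ - ξ₂).rank = 1)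
      (hrec : HIProp U ((l₁ + l₂, ((l₁ + l₂)⁻¹) • (l₁ • ξ₁ + l₂ • ξ₂)) :: rest)) :
      HIProp U L

/-- The family `(λ_i, ξ_i)_{1 ≤ i ≤ I}` satisfies `(H_I(U))`. -/
def SatisfiesH {N n : ℕ} (U : Set (Mat N n)) (I : ℕ) (l : Fin I → ℝ)
    (ξ : Fin I → Mat N n) : Prop :=
  HIProp U (List.ofFn fun i => (l i, ξ i))

/-- The gradient of a map `u : ℝ^n → ℝ^N`, as an `N × n` matrix. -/
def matGrad {N n : ℕ} (u : (Fin n → ℝ) → Fin N → ℝ) (x : Fin n → ℝ) : Mat N n :=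
  LinearMap.toMatrix' (fderiv ℝ u x).toLinearMap

/-- `u` is affine on the set `s`. -/
def AffineOn {N n : ℕ} (u : (Fin n → ℝ) → Fin N → ℝ) (s : Set (Fin n → ℝ)) : Prop :=
  ∃ (A : Mat N n) (b : Fin N → ℝ), ∀ x ∈ s, u x = A.mulVec x + b

/-- `u` is piecewise affine on the open set `Ω`. -/
def PiecewiseAffineOn {N n : ℕ} (u : (Fin n → ℝ) → Fin N → ℝ)
    (Ω : Set (Fin n → ℝ)) : Prop :=
  ContinuousOn u (closure Ω) ∧
  ∃ P : ℕ → Set (Fin n → ℝ),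
    (∀ k, IsOpen (P k)) ∧ (∀ k, P k ⊆ Ω) ∧
    (∀ k l, k ≠ l → Disjoint (P k) (P l)) ∧
    volume (Ω \ ⋃ k, P k) = 0 ∧ ∀ k, AffineOn u (P k)

/-- `u` is piecewise `C¹` on the open set `Ω`. -/
def PiecewiseC1On {N n : ℕ} (u : (Fin n → ℝ) → Fin N → ℝ)
    (Ω : Set (Fin n → ℝ)) : Prop :=
  ContinuousOn u (closure Ω) ∧
  ∃ P : ℕ → Set (Fin n → ℝ),
    (∀ k, IsOpen (P k)) ∧ (∀ k, P k ⊆ Ω) ∧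
    (∀ k l, k ≠ l → Disjoint (P k) (P l)) ∧
    volume (Ω \ ⋃ k, P k) = 0 ∧ ∀ k, ContDiffOn ℝ 1 u (P k)

/-- `u ∈ φ + W₀^{1,∞}(Ω; ℝ^N)`: `u` is Lipschitz on `closure Ω` and agrees with `φ`
on the boundary of `Ω`. -/
def MemW01inf {N n : ℕ} (Ω : Set (Fin n → ℝ)) (φ u : (Fin n → ℝ) → Fin N → ℝ) : Prop :=
  (∃ C : NNReal, LipschitzOnWith C u (closure Ω)) ∧ ∀ x ∈ frontier Ω, u x = φ x

/-- `K` has the relaxation property with respect to `E`. -/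
def HasRelaxationProperty {N n : ℕ} (K E : Set (Mat N n)) : Prop :=
  ∀ Ω : Set (Fin n → ℝ), IsOpen Ω → Bornology.IsBounded Ω →
    ∀ ξ ∈ K, ∀ b : Fin N → ℝ,
      ∃ u : ℕ → (Fin n → ℝ) → Fin N → ℝ,
        (∀ ν, PiecewiseAffineOn (u ν) Ω) ∧
        (∀ ν, MemW01inf Ω (fun x => ξ.mulVec x + b) (u ν)) ∧
        (∀ ν, ∀ᵐ x ∂(volume.restrict Ω), matGrad (u ν) x ∈ E ∪ K) ∧
        (∃ C : NNReal, ∀ ν, LipschitzOnWith C (u ν) (closure Ω)) ∧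
        TendstoUniformlyOn u (fun x => ξ.mulVec x + b) atTop (closure Ω) ∧
        Tendsto (fun ν => ∫ x in Ω, Metric.infDist (matGrad (u ν) x) E) atTop (nhds 0)

/-- The singular values of a square matrix, in nondecreasing order:
the square roots of the eigenvalues of `ξ ξᵀ`, sorted. -/
def singularValues {n : ℕ} (ξ : Matrix (Fin n) (Fin n) ℝ) (i : Fin n) : ℝ :=
  Real.sqrt ((Matrix.isHermitian_mul_conjTranspose_self ξ).eigenvalues
    (Tuple.sort (Matrix.isHermitian_mul_conjTranspose_self ξ).eigenvalues i))

end

section Statements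

open Metric Set

/-!
Fix a rank-one matrix `φ ⊗ a` and let `N` be the seminorm `|φ|` plus a small multiple of an
`ℓ¹`-norm, which makes the balls of `N` bounded. An affine map of slope `ξ` can be replaced, on
arbitrarily small disjoint `N`-balls filling a given open set up to a null set, by pyramids in the
direction `a` over these balls. The slopes of the new map are close to `ξ ± φ ⊗ a` and, by symmetry
of the balls, one half of the volume carries slopes close to `ξ + φ ⊗ a`. Performing the `J ≤ L`
steps of condition (H) one after the other, each inside the pieces produced by the previous one,
moves at least the fraction `2⁻ᴸ` of the volume into the `δ`-neighbourhood of `E`. Repeating this on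
the remaining pieces leaves the bad fraction `(1 - 2⁻ᴸ)ᵏ → 0`. All maps are Lipschitz with the same
constant because their slopes stay in the bounded open set `int K`.
-/

section Gluing

open Function
open scoped NNReal

/-- The map equal to `f i` on each `D i` and to `g` elsewhere, for pairwise disjoint `D i`; it
patches local modifications of `g` together. -/
noncomputable def glue {ι X Y : Type*} (D : ι → Set X) (f : ι → X → Y) (g : X → Y) (x : X) : Y :=
  if h : ∃ i, x ∈ D i then f h.choose x else g x

theorem glue_of_mem {ι X Y : Type*} {D : ι → Set X} {f : ι → X → Y} {g : X → Y}
    (hD : Pairwise (Disjoint on D)) {i : ι} {x : X} (hx : x ∈ D i) : glue D f g x = f i x := by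
  have h : ∃ i, x ∈ D i := ⟨i, hx⟩
  rw [glue, dif_pos h, hD.eq (not_disjoint_iff.2 ⟨x, h.choose_spec, hx⟩)]

theorem glue_of_notMem {ι X Y : Type*} {D : ι → Set X} {f : ι → X → Y} {g : X → Y} {x : X}
    (hx : x ∉ ⋃ i, D i) : glue D f g x = g x :=
  dif_neg (by rwa [mem_iUnion] at hx)

theorem notMem_iUnion_of_mem_frontier {ι X : Type*} [TopologicalSpace X] {D : ι → Set X}
    (hDo : ∀ i, IsOpen (D i)) (hD : Pairwise (Disjoint on D)) {i : ι} {x : X}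
    (hx : x ∈ frontier (D i)) : x ∉ ⋃ i, D i := by
  rw [mem_iUnion]
  rintro ⟨j, hj⟩
  obtain rfl | hij := eq_or_ne i j
  · exact disjoint_left.1 (disjoint_frontier_iff_isOpen.2 (hDo i)) hx hj
  · exact disjoint_left.1 ((hD hij).closure_left (hDo j)) hx.1 hj

variable {ι V W : Type*} [NormedAddCommGroup V] [NormedSpace ℝ V]

theorem exists_mem_segment_mem_frontier {D : Set V} {x y : V} (hx : x ∈ D) (hy : y ∉ D) :
    ∃ p ∈ segment ℝ x y, p ∈ frontier D := by
  by_contra! h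
  have hcover : segment ℝ x y ⊆ interior D ∪ (closure D)ᶜ := fun p hp => by
    by_contra hp'
    rw [mem_union, not_or, notMem_compl_iff] at hp'
    exact h p hp ⟨hp'.2, hp'.1⟩
  have hxD : x ∈ interior D :=
    (hcover (left_mem_segment ℝ x y)).resolve_right fun hx' => hx' (subset_closure hx)
  have hsub : segment ℝ x y ⊆ interior D :=
    (convex_segment x y).isPreconnected.subset_left_of_subset_union isOpen_interior
      isClosed_closure.isOpen_compl
      (disjoint_compl_right.mono_left (interior_subset.trans subset_closure)) hcover
      ⟨x, left_mem_segment ℝ x y, hxD⟩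
  exact hy (interior_subset (hsub (right_mem_segment ℝ x y)))

variable [PseudoMetricSpace W] {D : ι → Set V} {f : ι → V → W} {g : V → W} {C : ℝ≥0}

theorem dist_le_mul_dist_of_mem_segment {x p y : V} (hp : p ∈ segment ℝ x y)
    (hxp : dist (g x) (g p) ≤ C * dist x p) (hpy : dist (g p) (g y) ≤ C * dist p y) :
    dist (g x) (g y) ≤ C * dist x y := by
  rw [← dist_add_dist_of_mem_segment hp, mul_add]
  exact (dist_triangle _ _ _).trans (add_le_add hxp hpy)

theorem exists_mem_segment_dist_glue_le (hDo : ∀ i, IsOpen (D i)) (hD : Pairwise (Disjoint on D))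
    (hf : ∀ i, LipschitzWith C (f i)) (hfg : ∀ i, EqOn (f i) g (frontier (D i)))
    {i : ι} {x y : V} (hx : x ∈ D i) (hy : y ∉ D i) :
    ∃ p ∈ segment ℝ x y, p ∉ ⋃ i, D i ∧ dist (glue D f g x) (glue D f g p) ≤ C * dist x p := by
  obtain ⟨p, hp, hpD⟩ := exists_mem_segment_mem_frontier hx hy
  have hpU := notMem_iUnion_of_mem_frontier hDo hD hpD
  refine ⟨p, hp, hpU, ?_⟩
  rw [glue_of_mem hD hx, glue_of_notMem hpU, ← hfg i hpD]
  exact (hf i).dist_le_mul x p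

theorem lipschitzWith_glue (hDo : ∀ i, IsOpen (D i)) (hD : Pairwise (Disjoint on D))
    (hf : ∀ i, LipschitzWith C (f i)) (hg : LipschitzWith C g)
    (hfg : ∀ i, EqOn (f i) g (frontier (D i))) : LipschitzWith C (glue D f g) := by
  have outside {x y : V} (hy : y ∉ ⋃ i, D i) :
      dist (glue D f g x) (glue D f g y) ≤ C * dist x y := by
    have outside_both {p : V} (hp : p ∉ ⋃ i, D i) :
        dist (glue D f g p) (glue D f g y) ≤ C * dist p y := by
      rw [glue_of_notMem hp, glue_of_notMem hy]
      exact hg.dist_le_mul p y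
    by_cases hx : x ∈ ⋃ i, D i
    · obtain ⟨i, hi⟩ := mem_iUnion.1 hx
      obtain ⟨p, hp, hpU, hxp⟩ := exists_mem_segment_dist_glue_le hDo hD hf hfg hi
        fun h => hy (mem_iUnion_of_mem i h)
      exact dist_le_mul_dist_of_mem_segment hp hxp (outside_both hpU)
    · exact outside_both hx
  refine LipschitzWith.of_dist_le_mul fun x y => ?_
  by_cases hx : x ∈ ⋃ i, D i
  · obtain ⟨i, hi⟩ := mem_iUnion.1 hx
    by_cases hy : y ∈ D i
    · rw [glue_of_mem hD hi, glue_of_mem hD hy]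
      exact (hf i).dist_le_mul x y
    · obtain ⟨p, hp, hpU, hxp⟩ := exists_mem_segment_dist_glue_le hDo hD hf hfg hi hy
      refine dist_le_mul_dist_of_mem_segment hp hxp ?_
      rw [dist_comm, dist_comm p]
      exact outside hpU
  · rw [dist_comm, dist_comm x]
    exact outside hx

end Gluing

section Tiling

open Function

variable {ι X : Type*} [TopologicalSpace X] [MeasurableSpace X]

/-- `D` is a partition of `Ω`, up to a `μ`-null set, into open sets. -/
structure IsOpenTiling (μ : Measure X) (Ω : Set X) (D : ι → Set X) : Prop where
  isOpen : ∀ i, IsOpen (D i)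
  disjoint : Pairwise (Disjoint on D)
  subset : ∀ i, D i ⊆ Ω
  null : μ (Ω \ ⋃ i, D i) = 0

namespace IsOpenTiling

variable {μ : Measure X} {Ω : Set X} {D : ι → Set X} [Countable ι]

theorem tsum_measure_inter [OpensMeasurableSpace X] (hD : IsOpenTiling μ Ω D) {G : Set X}
    (hG : MeasurableSet G) : ∑' i, μ (D i ∩ G) = μ (Ω ∩ G) := by
  have hsub : (⋃ i, D i) ∩ G ⊆ Ω ∩ G := inter_subset_inter_left G (iUnion_subset hD.subset)
  have hnull : μ ((Ω ∩ G) \ ((⋃ i, D i) ∩ G)) = 0 := by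
    refine measure_mono_null ?_ hD.null
    rintro x ⟨⟨hxΩ, hxG⟩, hx⟩
    exact ⟨hxΩ, fun hxD => hx ⟨hxD, hxG⟩⟩
  have hdisj : Pairwise (Disjoint on fun i => D i ∩ G) :=
    hD.disjoint.mono fun i j h => h.mono inter_subset_left inter_subset_left
  rw [← measure_iUnion hdisj fun i => (hD.isOpen i).measurableSet.inter hG, ← iUnion_inter]
  exact measure_eq_measure_of_null_sdiff hsub hnull

theorem tsum_measure [OpensMeasurableSpace X] (hD : IsOpenTiling μ Ω D) :
    ∑' i, μ (D i) = μ Ω := by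
  simpa only [inter_univ] using hD.tsum_measure_inter MeasurableSet.univ

theorem exists_nat {p : Set X → Prop} (hD : IsOpenTiling μ Ω D) (hp : ∀ i, p (D i))
    (hp₀ : p ∅) : ∃ P : ℕ → Set X, IsOpenTiling μ Ω P ∧ ∀ k, p (P k) := by
  have := Encodable.ofCountable ι
  refine ⟨fun k => ⋃ i ∈ Encodable.decode₂ ι k, D i, ⟨fun k => ?_, ?_, fun k => ?_, ?_⟩,
    fun k => Encodable.iUnion_decode₂_cases (C := p) hp₀ hp⟩
  · exact isOpen_biUnion fun i _ => hD.isOpen i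
  · exact Encodable.iUnion_decode₂_disjoint_on hD.disjoint
  · exact iUnion₂_subset fun i _ => hD.subset i
  · rw [Encodable.iUnion_decode₂]
    exact hD.null

end IsOpenTiling

end Tiling

section AffineLocus

open Topology
open scoped Pointwise

variable {V W : Type*} [NormedAddCommGroup V] [NormedSpace ℝ V] [NormedAddCommGroup W]
  [NormedSpace ℝ W]

/-- The largest open set on which `u` is the affine map `x ↦ p.1 x + p.2`. -/
def affinePiece (u : V → W) (p : (V →L[ℝ] W) × W) : Set V :=
  interior {x | u x = p.1 x + p.2}

/-- The open set of points near which `u` is affine with slope in `S`. -/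
def affineLocus (u : V → W) (S : Set (V →L[ℝ] W)) : Set V :=
  ⋃ p ∈ Prod.fst ⁻¹' S, affinePiece u p

variable {u v : V → W} {S T : Set (V →L[ℝ] W)} {p q : (V →L[ℝ] W) × W} {x : V}

theorem mem_affinePiece_iff : x ∈ affinePiece u p ↔ ∀ᶠ y in 𝓝 x, u y = p.1 y + p.2 :=
  mem_interior_iff_mem_nhds

theorem eqOn_affinePiece : EqOn u (fun x => p.1 x + p.2) (affinePiece u p) :=
  fun _ hx => (mem_affinePiece_iff.1 hx).self_of_nhds

theorem hasFDerivAt_of_mem_affinePiece (hx : x ∈ affinePiece u p) : HasFDerivAt u p.1 x :=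
  (p.1.hasFDerivAt.add_const p.2).congr_of_eventuallyEq (mem_affinePiece_iff.1 hx)

theorem mem_affineLocus_iff :
    x ∈ affineLocus u S ↔ ∃ p : (V →L[ℝ] W) × W, p.1 ∈ S ∧ x ∈ affinePiece u p := by
  simp only [affineLocus, mem_iUnion, mem_preimage, exists_prop]

theorem fderiv_mem_of_mem_affineLocus (hx : x ∈ affineLocus u S) : fderiv ℝ u x ∈ S := by
  obtain ⟨p, hp, hxp⟩ := mem_affineLocus_iff.1 hx
  rwa [(hasFDerivAt_of_mem_affinePiece hxp).fderiv]

theorem isOpen_affineLocus : IsOpen (affineLocus u S) :=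
  isOpen_biUnion fun _ _ => isOpen_interior

theorem affineLocus_affine {A : V →L[ℝ] W} (hA : A ∈ S) (b : W) :
    affineLocus (fun x => A x + b) S = univ :=
  eq_univ_of_forall fun _ => mem_affineLocus_iff.2
    ⟨(A, b), hA, mem_affinePiece_iff.2 (Eventually.of_forall fun _ => rfl)⟩

theorem affineLocus_zero (hS : 0 ∈ S) : affineLocus (fun _ : V => (0 : W)) S = univ := by
  simpa only [_root_.zero_apply, add_zero] using affineLocus_affine hS 0

theorem add_mem_affineLocus (hu : x ∈ affineLocus u S) (hv : x ∈ affineLocus v T) :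
    x ∈ affineLocus (fun y => u y + v y) (S + T) := by
  obtain ⟨p, hp, hxp⟩ := mem_affineLocus_iff.1 hu
  obtain ⟨q, hq, hxq⟩ := mem_affineLocus_iff.1 hv
  refine mem_affineLocus_iff.2 ⟨p + q, add_mem_add hp hq, mem_affinePiece_iff.2 ?_⟩
  filter_upwards [mem_affinePiece_iff.1 hxp, mem_affinePiece_iff.1 hxq] with y hpy hqy
  rw [hpy, hqy]
  exact add_add_add_comm _ _ _ _

theorem disjoint_affinePiece_affineLocus (hp : p.1 ∉ S) :
    Disjoint (affinePiece u p) (affineLocus u S) :=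
  disjoint_left.2 fun _ hxp hxS =>
    hp ((hasFDerivAt_of_mem_affinePiece hxp).fderiv ▸ fderiv_mem_of_mem_affineLocus hxS)

theorem affineLocus_mono (h : S ⊆ T) : affineLocus u S ⊆ affineLocus u T :=
  biUnion_subset_biUnion_left (preimage_mono h)

theorem inter_affineLocus_subset_of_eqOn {D : Set V} (hD : IsOpen D) (h : EqOn u v D) :
    D ∩ affineLocus u S ⊆ affineLocus v S := by
  rintro x ⟨hxD, hx⟩
  obtain ⟨p, hp, hxp⟩ := mem_affineLocus_iff.1 hx
  refine mem_affineLocus_iff.2 ⟨p, hp, mem_affinePiece_iff.2 ?_⟩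
  filter_upwards [hD.mem_nhds hxD, mem_affinePiece_iff.1 hxp] with y hyD hy
  rw [← h hyD, hy]

theorem disjoint_affinePiece (hpq : p ≠ q) : Disjoint (affinePiece u p) (affinePiece u q) := by
  refine disjoint_left.2 fun x hp hq => hpq ?_
  have hfst : p.1 = q.1 :=
    (hasFDerivAt_of_mem_affinePiece hp).unique (hasFDerivAt_of_mem_affinePiece hq)
  have hval : p.1 x + p.2 = q.1 x + q.2 := (eqOn_affinePiece hp).symm.trans (eqOn_affinePiece hq)
  rw [hfst] at hval
  exact Prod.ext hfst (add_left_cancel hval)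

variable [MeasurableSpace V] {μ : Measure V} {Ω : Set V}

theorem exists_isOpenTiling_inter_affinePiece [TopologicalSpace.SeparableSpace V] (hΩ : IsOpen Ω)
    (h : μ (Ω \ affineLocus u S) = 0) : ∃ I : Set ((V →L[ℝ] W) × W), I.Countable ∧
      (∀ p ∈ I, p.1 ∈ S) ∧ IsOpenTiling μ Ω fun p : I => Ω ∩ affinePiece u p := by
  let I := {p : (V →L[ℝ] W) × W | p.1 ∈ S ∧ (Ω ∩ affinePiece u p).Nonempty}
  have hdisj : ∀ p q, p ≠ q → Disjoint (Ω ∩ affinePiece u p) (Ω ∩ affinePiece u q) :=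
    fun p q hpq => (disjoint_affinePiece hpq).mono inter_subset_right inter_subset_right
  refine ⟨I, ?_, fun p hp => hp.1, fun p => hΩ.inter isOpen_interior,
    fun p q hpq => hdisj p q (Subtype.coe_ne_coe.2 hpq), fun p => inter_subset_left, ?_⟩
  · exact PairwiseDisjoint.countable_of_isOpen (fun p _ q _ hpq => hdisj p q hpq)
      (fun p _ => hΩ.inter isOpen_interior) fun p hp => hp.2
  · refine measure_mono_null ?_ h
    rintro x ⟨hxΩ, hx⟩
    refine ⟨hxΩ, fun hxS => hx ?_⟩
    obtain ⟨p, hp, hxp⟩ := mem_affineLocus_iff.1 hxS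
    exact mem_iUnion.2 ⟨⟨p, hp, x, hxΩ, hxp⟩, hxΩ, hxp⟩

end AffineLocus

section Perturbation

open Topology
open scoped NNReal ENNReal

variable {ι V W : Type*} [NormedAddCommGroup V] [NormedSpace ℝ V] [NormedAddCommGroup W]
  [NormedSpace ℝ W]

theorem lipschitzWith_affine {C : ℝ≥0} {ξ : V →L[ℝ] W} (hC : ‖ξ‖ ≤ C) (b : W) :
    LipschitzWith C fun x => ξ x + b := by
  simpa only [add_zero] using
    (ContinuousLinearMap.lipschitzWith_of_opNorm_le hC).add (LipschitzWith.const b)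

variable [MeasurableSpace V]

/-- `u` is a `C`-Lipschitz perturbation of `g`, supported in `Ω` and uniformly `ε`-close to `g`,
which almost everywhere in `Ω` is locally affine with slope in `U`. -/
structure IsPerturbation (μ : Measure V) (C : ℝ≥0) (U : Set (V →L[ℝ] W)) (ε : ℝ) (Ω : Set V)
    (g u : V → W) : Prop where
  lipschitzWith : LipschitzWith C u
  eqOn_compl : EqOn u g Ωᶜ
  dist_le : ∀ x, dist (u x) (g x) ≤ ε
  null : μ (Ω \ affineLocus u U) = 0

/-- Affine maps of slope `ξ` admit arbitrarily close piecewise affine perturbations with slopes in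
`U`, and in `S` on at least a fraction `θ` of the volume. -/
def Laminable (μ : Measure V) (C : ℝ≥0) (U S : Set (V →L[ℝ] W)) (θ : ℝ≥0∞) (ξ : V →L[ℝ] W) :
    Prop :=
  ∀ ⦃Ω : Set V⦄, IsOpen Ω → ∀ (b : W) ⦃ε : ℝ⦄, 0 < ε →
    ∃ u, IsPerturbation μ C U ε Ω (fun x => ξ x + b) u ∧ θ * μ Ω ≤ μ (Ω ∩ affineLocus u S)

variable {μ : Measure V} {C : ℝ≥0} {U S T : Set (V →L[ℝ] W)} {Ω : Set V} {D : ι → Set V}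
  {f h : ι → V → W} {g u v : V → W} {ε ε₁ ε₂ : ℝ}

theorem IsPerturbation.trans (hu : IsPerturbation μ C U ε₁ Ω g u)
    (hv : IsPerturbation μ C S ε₂ Ω u v) : IsPerturbation μ C S (ε₁ + ε₂) Ω g v where
  lipschitzWith := hv.lipschitzWith
  eqOn_compl := hv.eqOn_compl.trans hu.eqOn_compl
  dist_le x := by
    rw [add_comm]
    exact (dist_triangle _ _ _).trans (add_le_add (hv.dist_le x) (hu.dist_le x))
  null := hv.null

theorem IsPerturbation.eqOn_frontier (hΩ : IsOpen Ω) (hg : Continuous g)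
    (hf : IsPerturbation μ C U ε Ω g u) (hv : Continuous v) (hgv : EqOn g v Ω) :
    EqOn u v (frontier Ω) := fun _ hx =>
  (hf.eqOn_compl (disjoint_left.1 (disjoint_frontier_iff_isOpen.2 hΩ) hx)).trans
    (hgv.closure hg hv hx.1)

theorem IsOpenTiling.isPerturbation_glue [Countable ι] (hD : IsOpenTiling μ Ω D) (hε : 0 ≤ ε)
    (hg : LipschitzWith C g) (hh : ∀ i, Continuous (h i)) (hhg : ∀ i, EqOn (h i) g (D i))
    (hf : ∀ i, IsPerturbation μ C U ε (D i) (h i) (f i)) :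
    IsPerturbation μ C U ε Ω g (glue D f g) where
  lipschitzWith := lipschitzWith_glue hD.isOpen hD.disjoint (fun i => (hf i).lipschitzWith) hg
    fun i => (hf i).eqOn_frontier (hD.isOpen i) (hh i) hg.continuous (hhg i)
  eqOn_compl _ hx := glue_of_notMem fun hxD => hx (iUnion_subset hD.subset hxD)
  dist_le x := by
    by_cases hx : x ∈ ⋃ i, D i
    · obtain ⟨i, hi⟩ := mem_iUnion.1 hx
      rw [glue_of_mem hD.disjoint hi, ← hhg i hi]
      exact (hf i).dist_le x
    · rwa [glue_of_notMem hx, dist_self]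
  null := by
    refine measure_mono_null ?_
      (measure_union_null hD.null (measure_iUnion_null fun i => (hf i).null))
    rintro x ⟨hxΩ, hx⟩
    by_cases hxD : x ∈ ⋃ i, D i
    · obtain ⟨i, hi⟩ := mem_iUnion.1 hxD
      refine Or.inr (mem_iUnion.2 ⟨i, hi, fun hxf => hx ?_⟩)
      exact inter_affineLocus_subset_of_eqOn (hD.isOpen i)
        (fun y hy => (glue_of_mem hD.disjoint hy).symm) ⟨hi, hxf⟩
    · exact Or.inl ⟨hxΩ, hxD⟩

theorem IsOpenTiling.tsum_measure_affineLocus_le [OpensMeasurableSpace V] [Countable ι]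
    (hD : IsOpenTiling μ Ω D) :
    ∑' i, μ (D i ∩ affineLocus (f i) S) ≤ μ (Ω ∩ affineLocus (glue D f g) S) := by
  rw [← hD.tsum_measure_inter isOpen_affineLocus.measurableSet]
  refine ENNReal.tsum_le_tsum fun i => measure_mono (subset_inter inter_subset_left ?_)
  exact inter_affineLocus_subset_of_eqOn (hD.isOpen i)
    fun y hy => (glue_of_mem hD.disjoint hy).symm

theorem isPerturbation_affine {ξ : V →L[ℝ] W} (hξ : ξ ∈ U) (hC : ‖ξ‖ ≤ C) (hε : 0 ≤ ε) (b : W) :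
    IsPerturbation μ C U ε Ω (fun x => ξ x + b) fun x => ξ x + b where
  lipschitzWith := lipschitzWith_affine hC b
  eqOn_compl := eqOn_refl _ _
  dist_le x := by rwa [dist_self]
  null := by rw [affineLocus_affine hξ, sdiff_univ, measure_empty]

namespace Laminable

variable {θ θ' m d κ : ℝ≥0∞} {ξ : V →L[ℝ] W}

theorem mono (h : Laminable μ C U S θ ξ) (hθ : θ' ≤ θ) : Laminable μ C U S θ' ξ := by
  intro Ω hΩ b ε hε
  obtain ⟨u, hu, hθu⟩ := h hΩ b hε
  exact ⟨u, hu, (mul_le_mul_left hθ _).trans hθu⟩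

theorem zero (hξ : ξ ∈ U) (hC : ‖ξ‖ ≤ C) : Laminable μ C U S 0 ξ := fun Ω _ b ε hε =>
  ⟨_, isPerturbation_affine hξ hC hε.le b, by rw [zero_mul]; exact zero_le⟩

theorem one (hSU : S ⊆ U) (hξ : ξ ∈ S) (hC : ‖ξ‖ ≤ C) : Laminable μ C U S 1 ξ := fun Ω _ b ε hε =>
  ⟨_, isPerturbation_affine (hSU hξ) hC hε.le b, by
    rw [one_mul, affineLocus_affine hξ, inter_univ]⟩

variable [TopologicalSpace.SeparableSpace V] [OpensMeasurableSpace V]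

theorem comp (hU : ∀ A ∈ U, Laminable μ C U T m A) (hS : ∀ A ∈ S, Laminable μ C U T (m + d) A)
    (hξ : Laminable μ C U S θ ξ) : Laminable μ C U T (m + d * θ) ξ := by
  intro Ω hΩ b ε hε
  obtain ⟨u, hu, hθ⟩ := hξ hΩ b (half_pos hε)
  obtain ⟨I, hI, hIU, hD⟩ := exists_isOpenTiling_inter_affinePiece hΩ hu.null
  have : Countable I := hI
  let D : I → Set V := fun p => Ω ∩ affinePiece u p
  have hpiece (p : I) : ∃ f, IsPerturbation μ C U (ε / 2) (D p) (fun x => p.1.1 x + p.1.2) f ∧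
      m * μ (D p) + d * μ (D p ∩ affineLocus u S) ≤ μ (D p ∩ affineLocus f T) := by
    by_cases hp : p.1.1 ∈ S
    · obtain ⟨f, hf, hle⟩ := hS _ hp (hD.isOpen p) p.1.2 (half_pos hε)
      rw [add_mul] at hle
      exact ⟨f, hf, (add_le_add_right (mul_le_mul_right (measure_mono inter_subset_left) d) _).trans
        hle⟩
    · obtain ⟨f, hf, hle⟩ := hU _ (hIU p p.2) (hD.isOpen p) p.1.2 (half_pos hε)
      have hempty : D p ∩ affineLocus u S = ∅ :=
        ((disjoint_affinePiece_affineLocus hp).mono_left inter_subset_right).inter_eq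
      refine ⟨f, hf, ?_⟩
      rwa [hempty, measure_empty, mul_zero, add_zero]
  choose f hf hfT using hpiece
  refine ⟨glue D f u, ?_, ?_⟩
  · rw [← add_halves ε]
    exact hu.trans (hD.isPerturbation_glue (half_pos hε).le hu.lipschitzWith
      (fun p => p.1.1.continuous.add_const _)
      (fun p => (eqOn_affinePiece.mono inter_subset_right).symm) hf)
  · calc (m + d * θ) * μ Ω = m * μ Ω + d * (θ * μ Ω) := by ring
      _ ≤ m * μ Ω + d * μ (Ω ∩ affineLocus u S) := by gcongr
      _ = ∑' p, (m * μ (D p) + d * μ (D p ∩ affineLocus u S)) := by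
        rw [ENNReal.tsum_add, ENNReal.tsum_mul_left, ENNReal.tsum_mul_left, hD.tsum_measure,
          hD.tsum_measure_inter isOpen_affineLocus.measurableSet]
      _ ≤ ∑' p, μ (D p ∩ affineLocus (f p) T) := ENNReal.tsum_le_tsum hfT
      _ ≤ μ (Ω ∩ affineLocus (glue D f u) T) := hD.tsum_measure_affineLocus_le

theorem iterate (hC : ∀ A ∈ U, ‖A‖ ≤ C) (hTU : T ⊆ U) (hθκ : θ + κ = 1)
    (h : ∀ A ∈ U, Laminable μ C U T θ A) (k : ℕ) :
    ∃ m, m + κ ^ k = 1 ∧ ∀ A ∈ U, Laminable μ C U T m A := by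
  induction k with
  | zero => exact ⟨0, by rw [pow_zero, zero_add], fun A hA => zero hA (hC A hA)⟩
  | succ k ih =>
    obtain ⟨m, hm, hlam⟩ := ih
    refine ⟨m + κ ^ k * θ, ?_, fun A hA => comp hlam (fun B hB => ?_) (h A hA)⟩
    · rw [pow_succ, add_assoc, ← mul_add, hθκ, mul_one, hm]
    · rw [hm]
      exact one hTU hB (hC B (hTU hB))

theorem exists_isPerturbation_measure_diff_le (hC : ∀ A ∈ U, ‖A‖ ≤ C) (hTU : T ⊆ U) (hθ : θ ≠ 0)
    (hθ₁ : θ ≤ 1) (h : ∀ A ∈ U, Laminable μ C U T θ A) (hξ : ξ ∈ U) (hΩ : IsOpen Ω)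
    (hμΩ : μ Ω ≠ ∞) (b : W) (hε : 0 < ε) {η : ℝ≥0∞} (hη : η ≠ 0) :
    ∃ u, IsPerturbation μ C U ε Ω (fun x => ξ x + b) u ∧ μ (Ω \ affineLocus u T) ≤ η := by
  have hκ : 1 - θ < 1 := ENNReal.sub_lt_self ENNReal.one_ne_top one_ne_zero hθ
  have hlim : Tendsto (fun k => (1 - θ) ^ k * μ Ω) atTop (𝓝 0) := by
    simpa only [zero_mul] using ENNReal.Tendsto.mul_const
      (ENNReal.tendsto_pow_atTop_nhds_zero_of_lt_one hκ) (Or.inr hμΩ)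
  obtain ⟨k, hk⟩ := (hlim.eventually_le_const (pos_iff_ne_zero.2 hη)).exists
  obtain ⟨m, hm, hlam⟩ := iterate hC hTU (add_tsub_cancel_of_le hθ₁) h k
  obtain ⟨u, hu, hmu⟩ := hlam ξ hξ hΩ b hε
  refine ⟨u, hu, le_trans ?_ hk⟩
  have hfin : μ (Ω ∩ affineLocus u T) ≠ ∞ := measure_ne_top_of_subset inter_subset_left hμΩ
  refine (ENNReal.add_le_add_iff_left hfin).1 ?_
  calc μ (Ω ∩ affineLocus u T) + μ (Ω \ affineLocus u T) = (m + (1 - θ) ^ k) * μ Ω := by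
        rw [hm, one_mul, measure_inter_add_sdiff Ω isOpen_affineLocus.measurableSet]
    _ = m * μ Ω + (1 - θ) ^ k * μ Ω := add_mul _ _ _
    _ ≤ μ (Ω ∩ affineLocus u T) + (1 - θ) ^ k * μ Ω := by gcongr

end Laminable

end Perturbation

section Covering

open scoped NNReal ENNReal Pointwise

variable {V : Type*} [NormedAddCommGroup V] [NormedSpace ℝ V] [FiniteDimensional ℝ V]
  [MeasurableSpace V] [BorelSpace V] (μ : Measure V) [μ.IsAddHaarMeasure]

theorem measure_vadd_smul (c : V) {r : ℝ} (hr : 0 ≤ r) (s : Set V) :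
    μ (c +ᵥ r • s) = ENNReal.ofReal (r ^ Module.finrank ℝ V) * μ s := by
  rw [measure_vadd, Measure.addHaar_smul_of_nonneg μ hr]

theorem exists_measure_closedBall_le_mul_vadd_smul {K : Set V} (hK : (interior K).Nonempty)
    (hKfin : μ K ≠ ∞) (R : ℝ) : ∃ C : ℝ≥0, ∀ (c : V) (r : ℝ), 0 < r →
      μ (closedBall c (r * R)) ≤ C * μ (c +ᵥ r • K) := by
  have hK₀ : μ K ≠ 0 := (Measure.measure_pos_of_nonempty_interior μ hK).ne'
  refine ⟨(μ (closedBall 0 R) / μ K).toNNReal, fun c r hr => ?_⟩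
  have hball : closedBall c (r * R) = c +ᵥ r • closedBall (0 : V) R := by
    rw [smul_closedBall' hr.ne', smul_zero, vadd_closedBall, vadd_eq_add, add_zero,
      Real.norm_of_nonneg hr.le]
  rw [hball, measure_vadd_smul μ c hr.le, measure_vadd_smul μ c hr.le,
    ENNReal.coe_toNNReal (ENNReal.div_ne_top measure_closedBall_lt_top.ne hK₀), mul_left_comm,
    ENNReal.div_mul_cancel hK₀ hKfin]

theorem exists_countable_pairwiseDisjoint_homothets {K Ω : Set V} (hKc : IsCompact K)
    (hK : (interior K).Nonempty) (hΩ : IsOpen Ω) {r₀ : ℝ} (hr₀ : 0 < r₀) :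
    ∃ I : Set (V × ℝ), I.Countable ∧
      (∀ p ∈ I, (0 < p.2 ∧ p.2 ≤ r₀) ∧ p.1 +ᵥ p.2 • K ⊆ Ω) ∧
      I.PairwiseDisjoint (fun p => p.1 +ᵥ p.2 • K) ∧ μ (Ω \ ⋃ p ∈ I, p.1 +ᵥ p.2 • K) = 0 := by
  obtain ⟨R, hR, hKR⟩ := hKc.isBounded.exists_pos_norm_le
  have hsub (c : V) {r : ℝ} (hr : 0 < r) : c +ᵥ r • K ⊆ closedBall c (r * R) := by
    rintro _ ⟨_, ⟨x, hx, rfl⟩, rfl⟩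
    rw [mem_closedBall_iff_norm]
    simpa [norm_smul, abs_of_pos hr] using mul_le_mul_of_nonneg_left (hKR x hx) hr.le
  obtain ⟨C, hC⟩ := exists_measure_closedBall_le_mul_vadd_smul μ hK hKc.measure_ne_top (3 * R)
  have hfine : ∀ x ∈ Ω, ∀ δ > 0, ∃ p ∈ {p : V × ℝ | (0 < p.2 ∧ p.2 ≤ r₀) ∧ p.1 +ᵥ p.2 • K ⊆ Ω},
      p.2 * R ≤ δ ∧ p.1 = x := by
    intro x hx δ hδ
    obtain ⟨ρ, hρ, hball⟩ := nhds_basis_closedBall.mem_iff.1 (hΩ.mem_nhds hx)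
    have hr : 0 < min r₀ (min δ ρ / R) := lt_min hr₀ (div_pos (lt_min hδ hρ) hR)
    have hrR : min r₀ (min δ ρ / R) * R ≤ min δ ρ := (le_div_iff₀ hR).1 (min_le_right _ _)
    refine ⟨(x, _), ⟨⟨hr, min_le_left _ _⟩, (hsub x hr).trans ?_⟩,
      hrR.trans (min_le_left _ _), rfl⟩
    exact (closedBall_subset_closedBall (hrR.trans (min_le_right _ _))).trans hball
  obtain ⟨I, hIt, hI⟩ := Vitali.exists_disjoint_covering_ae μ Ω _ C (fun p => p.2 * R) Prod.fst
    (fun p => p.1 +ᵥ p.2 • K) (fun p hp => hsub p.1 hp.1.1)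
    (fun p hp => mul_left_comm 3 p.2 R ▸ hC p.1 p.2 hp.1.1)
    (fun p hp => by
      rw [interior_vadd, interior_smul₀ hp.1.1.ne']
      exact hK.smul_set.vadd_set)
    (fun p _ => ((hKc.smul p.2).vadd p.1).isClosed) hfine
  exact ⟨I, hI.1, hIt, hI.2⟩

theorem exists_isOpenTiling_homothets {D Ω : Set V} (hDo : IsOpen D) (hDn : D.Nonempty)
    (hDb : Bornology.IsBounded D) (hDf : μ (frontier D) = 0) (hΩ : IsOpen Ω) {r₀ : ℝ}
    (hr₀ : 0 < r₀) : ∃ I : Set (V × ℝ), I.Countable ∧ (∀ p ∈ I, 0 < p.2 ∧ p.2 ≤ r₀) ∧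
      IsOpenTiling μ Ω fun p : I => p.1.1 +ᵥ p.1.2 • D := by
  obtain ⟨I, hI, hIΩ, hdisj, hnull⟩ := exists_countable_pairwiseDisjoint_homothets μ
    hDb.isCompact_closure (hDn.mono (interior_maximal subset_closure hDo)) hΩ hr₀
  have : Countable I := hI
  have hsub (p : V × ℝ) : p.1 +ᵥ p.2 • D ⊆ p.1 +ᵥ p.2 • closure D :=
    vadd_set_mono (smul_set_mono subset_closure)
  have hboundary (p : I) : μ ((p.1.1 +ᵥ p.1.2 • closure D) \ (p.1.1 +ᵥ p.1.2 • D)) = 0 := by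
    rw [← vadd_set_sdiff, ← smul_set_sdiff₀ (hIΩ p p.2).1.1.ne', ← hDo.frontier_eq,
      measure_vadd_smul μ _ (hIΩ p p.2).1.1.le, hDf, mul_zero]
  refine ⟨I, hI, fun p hp => (hIΩ p hp).1, fun p => (hDo.smul₀ (hIΩ p p.2).1.1.ne').vadd p.1.1,
    fun p q hpq => (hdisj p.2 q.2 (Subtype.coe_ne_coe.2 hpq)).mono (hsub p) (hsub q),
    fun p => (hsub p).trans (hIΩ p p.2).2,
    measure_mono_null ?_ (measure_union_null hnull (measure_iUnion_null hboundary))⟩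
  rw [biUnion_eq_iUnion]
  rintro x ⟨hxΩ, hx⟩
  by_cases hxc : x ∈ ⋃ p : I, p.1.1 +ᵥ p.1.2 • closure D
  · obtain ⟨p, hp⟩ := mem_iUnion.1 hxc
    exact Or.inr (mem_iUnion.2 ⟨p, hp, fun hxp => hx (mem_iUnion.2 ⟨p, hxp⟩)⟩)
  · exact Or.inl ⟨hxΩ, hxc⟩

theorem exists_isOpenTiling_seminorm_ball {q : Seminorm ℝ V} (hq : Continuous q)
    (hqb : Bornology.IsBounded (q.ball 0 1)) {Ω : Set V} (hΩ : IsOpen Ω) {r₀ : ℝ} (hr₀ : 0 < r₀) :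
    ∃ I : Set (V × ℝ), I.Countable ∧ (∀ p ∈ I, 0 < p.2 ∧ p.2 ≤ r₀) ∧
      IsOpenTiling μ Ω fun p : I => q.ball p.1.1 p.1.2 := by
  have hopen : IsOpen (q.ball 0 1) := by
    rw [Seminorm.ball_zero_eq]
    exact isOpen_lt hq continuous_const
  obtain ⟨I, hI, hr, htile⟩ := exists_isOpenTiling_homothets μ hopen ⟨0, q.mem_ball_self one_pos⟩
    hqb ((q.convex_ball 0 1).addHaar_frontier μ) hΩ hr₀
  refine ⟨I, hI, hr, ?_⟩
  convert htile using 2 with p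
  rw [Seminorm.smul_ball_zero (hr p p.2).1.ne', Seminorm.vadd_ball, vadd_eq_add, add_zero,
    Real.norm_of_nonneg (hr p p.2).1.le, mul_one]

end Covering

section AbsoluteValue

open Topology
open scoped Pointwise

variable {V : Type*} [NormedAddCommGroup V] [NormedSpace ℝ V] {φ : V →L[ℝ] ℝ} {x : V}

theorem mem_affineLocus_abs_of_pos (hx : 0 < φ x) : x ∈ affineLocus (fun y => |φ y|) {φ} := by
  refine mem_affineLocus_iff.2 ⟨(φ, 0), rfl, mem_affinePiece_iff.2 ?_⟩
  filter_upwards [φ.continuous.continuousAt.eventually_const_lt hx] with y hy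
  rw [abs_of_pos hy, add_zero]

theorem mem_affineLocus_abs_of_neg (hx : φ x < 0) : x ∈ affineLocus (fun y => |φ y|) {-φ} := by
  have h := mem_affineLocus_abs_of_pos (φ := -φ) (x := x) (by simpa using hx)
  simpa only [_root_.neg_apply, abs_neg] using h

variable [FiniteDimensional ℝ V] [MeasurableSpace V] [BorelSpace V] (μ : Measure V)
  [μ.IsAddHaarMeasure]

theorem ae_apply_ne_zero (hφ : φ ≠ 0) : ∀ᵐ x ∂μ, φ x ≠ 0 := by
  have hker : LinearMap.ker φ.toLinearMap ≠ ⊤ := fun h =>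
    hφ (ContinuousLinearMap.coe_injective (LinearMap.ker_eq_top.1 h))
  simp only [ae_iff, not_not]
  exact Measure.addHaar_submodule μ _ hker

theorem ae_mem_affineLocus_abs (φ : V →L[ℝ] ℝ) :
    ∀ᵐ x ∂μ, x ∈ affineLocus (fun y => |φ y|) (closedBall 0 ‖φ‖) := by
  obtain rfl | hφ := eq_or_ne φ 0
  · simp [affineLocus_zero]
  · filter_upwards [ae_apply_ne_zero μ hφ] with x hx
    obtain hx | hx := hx.lt_or_gt
    · exact affineLocus_mono (by simp) (mem_affineLocus_abs_of_neg hx)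
    · exact affineLocus_mono (by simp) (mem_affineLocus_abs_of_pos hx)

theorem ae_mem_affineLocus_sum_abs {ι : Type*} (ψ : ι → V →L[ℝ] ℝ) (s : Finset ι) :
    ∀ᵐ x ∂μ, x ∈ affineLocus (fun y => ∑ i ∈ s, |ψ i y|) (closedBall 0 (∑ i ∈ s, ‖ψ i‖)) := by
  induction s using Finset.induction_on with
  | empty => simp [affineLocus_zero]
  | insert i s hi ih =>
    filter_upwards [ih, ae_mem_affineLocus_abs μ (ψ i)] with x hx hxi
    have h := add_mem_affineLocus hxi hx
    rw [closedBall_add_closedBall (norm_nonneg _) (Finset.sum_nonneg fun j _ => norm_nonneg _),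
      add_zero] at h
    simpa only [Finset.sum_insert hi] using h

theorem exists_seminorm_ae_mem_affineLocus {ε : ℝ} (hε : 0 < ε) :
    ∃ q : Seminorm ℝ V, Bornology.IsBounded (q.ball 0 1) ∧ (∀ x, q x ≤ ε * ‖x‖) ∧
      ∀ᵐ x ∂μ, x ∈ affineLocus q (closedBall 0 ε) := by
  let B := Module.finBasis ℝ V
  let coord i : V →L[ℝ] ℝ := (B.coord i).toContinuousLinearMap
  obtain ⟨t, ht, htε⟩ := exists_pos_mul_lt hε (∑ i, ‖coord i‖)
  let q : Seminorm ℝ V := ∑ i, (normSeminorm ℝ ℝ).comp (t • coord i).toLinearMap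
  have hq x : q x = ∑ i, |(t • coord i) x| := _root_.sum_apply _ _ _
  have hsum : ∑ i, ‖t • coord i‖ ≤ ε := by
    simp only [norm_smul, Real.norm_of_nonneg ht.le, ← Finset.mul_sum]
    rw [mul_comm]
    exact htε.le
  refine ⟨q, ?_, fun x => ?_, ?_⟩
  · refine isBounded_iff_forall_norm_le.2 ⟨∑ i, t⁻¹ * ‖B i‖, fun x hx => ?_⟩
    rw [Seminorm.mem_ball_zero, hq] at hx
    have hcoord i : ‖B.repr x i‖ ≤ t⁻¹ := by
      have hle : |t * B.repr x i| ≤ 1 :=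
        (Finset.single_le_sum (fun j _ => abs_nonneg ((t • coord j) x)) (Finset.mem_univ i)).trans
          hx.le
      rwa [abs_mul, abs_of_pos ht, ← le_inv_mul_iff₀ ht, mul_one] at hle
    calc ‖x‖ = ‖∑ i, B.repr x i • B i‖ := by rw [B.sum_repr]
      _ ≤ ∑ i, t⁻¹ * ‖B i‖ := norm_sum_le_of_le _ fun i _ =>
        (norm_smul_le _ _).trans (mul_le_mul_of_nonneg_right (hcoord i) (norm_nonneg _))
  · calc q x ≤ ∑ i, ‖t • coord i‖ * ‖x‖ :=
        (hq x).trans_le (Finset.sum_le_sum fun i _ => (t • coord i).le_opNorm x)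
      _ = (∑ i, ‖t • coord i‖) * ‖x‖ := (Finset.sum_mul _ _ _).symm
      _ ≤ ε * ‖x‖ := by gcongr
  · rw [show ⇑q = fun x => ∑ i, |(t • coord i) x| from funext hq]
    filter_upwards [ae_mem_affineLocus_sum_abs μ (fun i => t • coord i) Finset.univ] with x hx
    exact affineLocus_mono (closedBall_subset_closedBall hsum) hx

theorem exists_seminorm_ae_mem_affineLocus_closedBall (φ : V →L[ℝ] ℝ) {ε : ℝ} (hε : 0 < ε) :
    ∃ N : Seminorm ℝ V, Continuous N ∧ Bornology.IsBounded (N.ball 0 1) ∧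
      (∀ x, N x ≤ |φ x| + ε * ‖x‖) ∧
      ∀ᵐ x ∂μ, (φ x < 0 → x ∈ affineLocus N (closedBall (-φ) ε)) ∧
        (0 < φ x → x ∈ affineLocus N (closedBall φ ε)) := by
  obtain ⟨q, hqb, hqε, hq⟩ := exists_seminorm_ae_mem_affineLocus μ hε
  let N : Seminorm ℝ V := (normSeminorm ℝ ℝ).comp φ.toLinearMap + q
  have hNε x : N x ≤ |φ x| + ε * ‖x‖ := by
    simpa [N] using hqε x
  have hbound : Continuous fun x => |φ x| + ε * ‖x‖ := by fun_prop
  have hN₀ : Tendsto N (𝓝 0) (𝓝 0) :=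
    squeeze_zero (apply_nonneg N) hNε (by simpa using hbound.tendsto 0)
  have hball : N.ball 0 1 ⊆ q.ball 0 1 := fun x hx => by
    rw [Seminorm.mem_ball_zero] at hx ⊢
    exact (le_add_of_nonneg_left (norm_nonneg (φ x))).trans_lt hx
  refine ⟨N, Seminorm.continuous_of_continuousAt_zero (by rwa [ContinuousAt, map_zero]),
    hqb.subset hball, hNε, ?_⟩
  filter_upwards [hq] with x hx
  have hclosedBall (ψ : V →L[ℝ] ℝ) : {ψ} + closedBall 0 ε = closedBall ψ ε := by simp
  exact ⟨fun h => hclosedBall (-φ) ▸ add_mem_affineLocus (mem_affineLocus_abs_of_neg h) hx,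
    fun h => hclosedBall φ ▸ add_mem_affineLocus (mem_affineLocus_abs_of_pos h) hx⟩

end AbsoluteValue

section Pyramid

open Topology
open scoped NNReal

variable {V W : Type*} [NormedAddCommGroup V] [NormedSpace ℝ V] [NormedAddCommGroup W]
  [NormedSpace ℝ W]

/-- The affine map `x ↦ ξ x + b` tilted in the direction `a` by the distance to the complement of
the `N`-ball of centre `c` and radius `r`. -/
noncomputable def pyramid (N : Seminorm ℝ V) (ξ : V →L[ℝ] W) (b a : W) (c : V) (r : ℝ) (x : V) :
    W :=
  ξ x + b + max (r - N (x - c)) 0 • a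

variable {N : Seminorm ℝ V} {ξ : V →L[ℝ] W} {a b : W} {c x : V} {r : ℝ}

theorem pyramid_of_notMem_ball (hx : x ∉ N.ball c r) : pyramid N ξ b a c r x = ξ x + b := by
  rw [Seminorm.mem_ball, not_lt] at hx
  rw [pyramid, max_eq_right (sub_nonpos.2 hx), zero_smul, add_zero]

theorem dist_pyramid_le (hr : 0 ≤ r) : dist (pyramid N ξ b a c r x) (ξ x + b) ≤ r * ‖a‖ := by
  rw [pyramid, dist_self_add_left, norm_smul, Real.norm_of_nonneg (le_max_right _ _)]
  gcongr
  exact max_le (sub_le_self r (apply_nonneg N _)) hr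

theorem mem_affineLocus_pyramid (hN : Continuous N) {T : Set (V →L[ℝ] ℝ)}
    {S : Set (V →L[ℝ] W)} (hTS : MapsTo (fun ψ => ξ - ψ.smulRight a) T S) (hx : x ∈ N.ball c r)
    (hxT : x - c ∈ affineLocus N T) : x ∈ affineLocus (pyramid N ξ b a c r) S := by
  obtain ⟨⟨ψ, e⟩, hψ, hxψ⟩ := mem_affineLocus_iff.1 hxT
  have hball : ∀ᶠ y in 𝓝 x, N (y - c) < r :=
    (hN.comp (continuous_sub_right c)).continuousAt.eventually_lt_const hx
  have haffine : ∀ᶠ y in 𝓝 x, N (y - c) = ψ (y - c) + e :=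
    (continuous_sub_right c).continuousAt.eventually (mem_affinePiece_iff.1 hxψ)
  refine mem_affineLocus_iff.2 ⟨(ξ - ψ.smulRight a, b + (r + ψ c - e) • a), hTS hψ,
    mem_affinePiece_iff.2 ?_⟩
  filter_upwards [hball, haffine] with y hyr hy
  rw [pyramid, max_eq_left (sub_nonneg.2 hyr.le), hy, map_sub, _root_.sub_apply,
    ContinuousLinearMap.smulRight_apply]
  module

theorem norm_add_smul_le_of_abs_le {v : W} {M s t : ℝ} (hpos : ‖v + t • a‖ ≤ M)
    (hneg : ‖v + (-t) • a‖ ≤ M) (hst : |s| ≤ t) : ‖v + s • a‖ ≤ M := by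
  have hconv : Convex ℝ {s : ℝ | ‖v + s • a‖ ≤ M} := by
    have heq : {s : ℝ | ‖v + s • a‖ ≤ M} =
        AffineMap.lineMap v (v + a) ⁻¹' closedBall (0 : W) M := by
      ext s
      simp [AffineMap.lineMap_apply, add_comm]
    rw [heq]
    exact (convex_closedBall (0 : W) M).affine_preimage _
  exact hconv.ordConnected.out hneg hpos (abs_le.1 hst)

theorem exists_mem_closedBall_apply_eq (φ : V →L[ℝ] ℝ) {ε : ℝ} (hε : 0 ≤ ε) (z : V) :
    ∃ ψ ∈ closedBall φ ε, |ψ z| = |φ z| + ε * ‖z‖ := by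
  obtain ⟨g, hg, hgz⟩ := exists_dual_vector'' ℝ z
  have hle : ‖ε • g‖ ≤ ε := by
    rw [norm_smul, Real.norm_of_nonneg hε]
    exact mul_le_of_le_one_right hε hg
  have hεz : 0 ≤ ε * ‖z‖ := by positivity
  obtain hφ | hφ := le_total 0 (φ z)
  · refine ⟨φ + ε • g, by simpa [mem_closedBall_iff_norm] using hle, ?_⟩
    simp [hgz, abs_of_nonneg, hφ, add_nonneg hφ hεz]
  · refine ⟨φ - ε • g, by simpa [mem_closedBall_iff_norm] using hle, ?_⟩
    rw [_root_.sub_apply, _root_.smul_apply, hgz, RCLike.ofReal_real_eq_id, id, smul_eq_mul,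
      abs_of_nonpos hφ, abs_of_nonpos (by linarith)]
    ring

variable {φ : V →L[ℝ] ℝ} {C : ℝ≥0} {ε : ℝ}

theorem lipschitzWith_pyramid (hN : ∀ x, N x ≤ |φ x| + ε * ‖x‖) (hε : 0 ≤ ε)
    (hpos : ∀ ψ ∈ closedBall φ ε, ‖ξ - ψ.smulRight a‖ ≤ C)
    (hneg : ∀ ψ ∈ closedBall (-φ) ε, ‖ξ - ψ.smulRight a‖ ≤ C) :
    LipschitzWith C (pyramid N ξ b a c r) := by
  refine LipschitzWith.of_dist_le_mul fun x y => ?_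
  set s := max (r - N (x - c)) 0 - max (r - N (y - c)) 0 with hs
  have hsN : |s| ≤ N (x - y) :=
    calc |s| ≤ |(r - N (x - c)) - (r - N (y - c))| := abs_max_sub_max_le_abs _ _ _
      _ = |N (x - c) - N (y - c)| := by rw [sub_sub_sub_cancel_left, abs_sub_comm]
      _ ≤ N (x - y) := by simpa only [sub_sub_sub_cancel_right] using
          abs_sub_map_le_sub N (x - c) (y - c)
  -- At `x - y` the bound on `N` is attained by some `|ψ|`, so the increment of the pyramid lies
  -- between those of the linear maps `ξ - ψ ⊗ a` and `ξ + ψ ⊗ a`.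
  obtain ⟨ψ, hψ, hψz⟩ := exists_mem_closedBall_apply_eq φ hε (x - y)
  have hψ' : -ψ ∈ closedBall (-φ) ε := by rwa [mem_closedBall, dist_neg_neg]
  have hplus : ‖ξ (x - y) + ψ (x - y) • a‖ ≤ C * dist x y := by
    simpa only [dist_eq_norm, _root_.sub_apply, ContinuousLinearMap.smulRight_apply,
      _root_.neg_apply, neg_smul, sub_neg_eq_add] using
      (ξ - (-ψ).smulRight a).le_of_opNorm_le (hneg _ hψ') (x - y)
  have hminus : ‖ξ (x - y) + (-ψ (x - y)) • a‖ ≤ C * dist x y := by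
    simpa only [dist_eq_norm, _root_.sub_apply, ContinuousLinearMap.smulRight_apply,
      neg_smul, ← sub_eq_add_neg] using
      (ξ - ψ.smulRight a).le_of_opNorm_le (hpos _ hψ) (x - y)
  have hsψ : |s| ≤ |ψ (x - y)| := hsN.trans ((hN _).trans hψz.ge)
  have hdiff : pyramid N ξ b a c r x - pyramid N ξ b a c r y = ξ (x - y) + s • a := by
    rw [pyramid, pyramid, map_sub ξ, hs]
    module
  rw [dist_eq_norm, hdiff]
  obtain h | h := abs_choice (ψ (x - y))
  · exact norm_add_smul_le_of_abs_le hplus hminus (hsψ.trans_eq h)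
  · exact norm_add_smul_le_of_abs_le hminus (by rwa [neg_neg]) (hsψ.trans_eq h)

section Measure

variable [FiniteDimensional ℝ V] [MeasurableSpace V] [BorelSpace V] {μ : Measure V}
  [μ.IsAddHaarMeasure]

theorem measure_ball_le_two_mul_measure_inter_neg (N : Seminorm ℝ V) (hN : Continuous N)
    (hφ : φ ≠ 0) (c : V) (r : ℝ) :
    μ (N.ball c r) ≤ 2 * μ (N.ball c r ∩ {x | φ (x - c) < 0}) := by
  set H := N.ball c r ∩ {x | φ (x - c) < 0}
  have hmeas : MeasurableSet H := by
    refine IsOpen.measurableSet (IsOpen.inter ?_ ?_)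
    · exact isOpen_lt (hN.comp (continuous_sub_right c)) continuous_const
    · exact isOpen_lt (φ.continuous.comp (continuous_sub_right c)) continuous_const
  have hreflect : μ ((c + c - ·) ⁻¹' H) = μ H :=
    (Measure.measurePreserving_sub_left μ (c + c)).measure_preimage hmeas.nullMeasurableSet
  have hae : N.ball c r ≤ᵐ[μ] (H ∪ (c + c - ·) ⁻¹' H : Set V) := by
    filter_upwards [(eventually_sub_right_iff μ c).2 (ae_apply_ne_zero μ hφ)] with x hx hxball
    obtain hx | hx := hx.lt_or_gt
    · exact Or.inl ⟨hxball, hx⟩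
    · have hrefl : c + c - x - c = c - x := by abel
      refine Or.inr ⟨?_, ?_⟩
      · rwa [Seminorm.mem_ball, hrefl, map_sub_rev]
      · rw [mem_ofPred_eq, hrefl, ← neg_sub, map_neg]
        exact neg_neg_of_pos hx
  calc μ (N.ball c r) ≤ μ H + μ ((c + c - ·) ⁻¹' H) :=
        (measure_mono_ae hae).trans (measure_union_le _ _)
    _ = 2 * μ H := by rw [hreflect, two_mul]

variable {S U : Set (V →L[ℝ] W)} {δ : ℝ}

theorem measure_ball_le_two_mul_measure_inter_affineLocus_pyramid (hN : Continuous N)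
    (hφ : φ ≠ 0) (hae : ∀ᵐ x ∂μ, φ x < 0 → x ∈ affineLocus N (closedBall (-φ) ε))
    (hS : MapsTo (fun ψ => ξ - ψ.smulRight a) (closedBall (-φ) ε) S) :
    μ (N.ball c r) ≤ 2 * μ (N.ball c r ∩ affineLocus (pyramid N ξ b a c r) S) := by
  refine (measure_ball_le_two_mul_measure_inter_neg N hN hφ c r).trans ?_
  gcongr 2 * ?_
  refine measure_mono_ae ?_
  filter_upwards [(eventually_sub_right_iff μ c).2 hae] with x hx hxH
  exact ⟨hxH.1, mem_affineLocus_pyramid hN hS hxH.1 (hx hxH.2)⟩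

theorem isPerturbation_pyramid (hN : Continuous N) (hNε : ∀ x, N x ≤ |φ x| + ε * ‖x‖)
    (hε : 0 ≤ ε) (hφ : φ ≠ 0)
    (hae : ∀ᵐ x ∂μ, (φ x < 0 → x ∈ affineLocus N (closedBall (-φ) ε)) ∧
      (0 < φ x → x ∈ affineLocus N (closedBall φ ε)))
    (hneg : MapsTo (fun ψ => ξ - ψ.smulRight a) (closedBall (-φ) ε) U)
    (hpos : MapsTo (fun ψ => ξ - ψ.smulRight a) (closedBall φ ε) U) (hC : ∀ A ∈ U, ‖A‖ ≤ C)
    (hr : 0 ≤ r) (hδ : r * ‖a‖ ≤ δ) :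
    IsPerturbation μ C U δ (N.ball c r) (fun x => ξ x + b) (pyramid N ξ b a c r) where
  lipschitzWith := lipschitzWith_pyramid hNε hε (fun _ hψ => hC _ (hpos hψ))
    fun _ hψ => hC _ (hneg hψ)
  eqOn_compl _ hx := pyramid_of_notMem_ball hx
  dist_le _ := (dist_pyramid_le hr).trans hδ
  null := by
    refine ae_le_set.1 ?_
    filter_upwards [(eventually_sub_right_iff μ c).2 hae,
      (eventually_sub_right_iff μ c).2 (ae_apply_ne_zero μ hφ)] with x hx hx₀ hxball
    obtain h | h := hx₀.lt_or_gt
    · exact mem_affineLocus_pyramid hN hneg hxball (hx.1 h)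
    · exact mem_affineLocus_pyramid hN hpos hxball (hx.2 h)

end Measure

end Pyramid

section Lamination

open Topology
open scoped NNReal ENNReal

variable {V W : Type*} [NormedAddCommGroup V] [NormedSpace ℝ V] [NormedAddCommGroup W]
  [NormedSpace ℝ W] {S T U : Set (V →L[ℝ] W)} {ξ : V →L[ℝ] W} {φ : V →L[ℝ] ℝ} {a : W}

theorem exists_mapsTo_sub_smulRight (hS : S ∈ 𝓝 (ξ + φ.smulRight a))
    (hU : U ∈ 𝓝 (ξ - φ.smulRight a)) :
    ∃ ε > 0, MapsTo (fun ψ => ξ - ψ.smulRight a) (closedBall (-φ) ε) S ∧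
      MapsTo (fun ψ => ξ - ψ.smulRight a) (closedBall φ ε) U := by
  have hF : Continuous fun ψ : V →L[ℝ] ℝ => ξ - ψ.smulRight a :=
    continuous_const.sub ((ContinuousLinearMap.smulRightL ℝ V W).flip a).continuous
  have hFφ : ξ - (-φ).smulRight a = ξ + φ.smulRight a := by
    ext
    simp
  obtain ⟨ε₁, hε₁, h₁⟩ := nhds_basis_closedBall.mem_iff.1
    (hF.continuousAt (x := -φ) (by rwa [hFφ]))
  obtain ⟨ε₂, hε₂, h₂⟩ := nhds_basis_closedBall.mem_iff.1 (hF.continuousAt (x := φ) hU)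
  exact ⟨min ε₁ ε₂, lt_min hε₁ hε₂,
    fun ψ hψ => h₁ (closedBall_subset_closedBall (min_le_left _ _) hψ),
    fun ψ hψ => h₂ (closedBall_subset_closedBall (min_le_right _ _) hψ)⟩

variable [FiniteDimensional ℝ V] [MeasurableSpace V] [BorelSpace V] {μ : Measure V}
  [μ.IsAddHaarMeasure] {C : ℝ≥0}

theorem laminable_two_inv (hC : ∀ A ∈ U, ‖A‖ ≤ C) (hSU : S ⊆ U)
    (hS : S ∈ 𝓝 (ξ + φ.smulRight a)) (hU : U ∈ 𝓝 (ξ - φ.smulRight a)) :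
    Laminable μ C U S 2⁻¹ ξ := by
  have hξC : ‖ξ‖ ≤ C := by
    have hplus := hC _ (hSU (mem_of_mem_nhds hS))
    have hminus := hC _ (mem_of_mem_nhds hU)
    simpa using norm_add_smul_le_of_abs_le (v := ξ) (a := φ.smulRight a) (s := 0) (t := 1)
      (by simpa using hplus) (by simpa [sub_eq_add_neg] using hminus) (by simp)
  obtain rfl | hφ := eq_or_ne φ 0
  · have hξS : ξ ∈ S := by simpa using mem_of_mem_nhds hS
    exact (Laminable.one hSU hξS hξC).mono (ENNReal.inv_le_one.2 one_le_two)
  obtain ⟨ε, hε, hneg, hpos⟩ := exists_mapsTo_sub_smulRight hS hU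
  obtain ⟨N, hN, hNb, hNε, hae⟩ := exists_seminorm_ae_mem_affineLocus_closedBall μ φ hε
  intro Ω hΩ b δ hδ
  obtain ⟨r₀, hr₀, hr₀δ⟩ := exists_pos_mul_lt hδ ‖a‖
  obtain ⟨I, hI, hr, hD⟩ := exists_isOpenTiling_seminorm_ball μ hN hNb hΩ hr₀
  have : Countable I := hI
  let f (p : I) : V → W := pyramid N ξ b a p.1.1 p.1.2
  refine ⟨glue (fun p : I => N.ball p.1.1 p.1.2) f fun x => ξ x + b, ?_, ?_⟩
  · refine hD.isPerturbation_glue hδ.le (lipschitzWith_affine hξC b)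
      (fun _ => ξ.continuous.add_const b) (fun _ => eqOn_refl _ _) fun p => ?_
    refine isPerturbation_pyramid hN hNε hε.le hφ hae (hneg.mono_right hSU) hpos hC
      (hr p p.2).1.le ?_
    rw [mul_comm]
    exact (mul_le_mul_of_nonneg_left (hr p p.2).2 (norm_nonneg a)).trans hr₀δ.le
  · have hhalf (p : I) : 2⁻¹ * μ (N.ball p.1.1 p.1.2) ≤
        μ (N.ball p.1.1 p.1.2 ∩ affineLocus (f p) S) := by
      rw [ENNReal.inv_mul_le_iff two_ne_zero ENNReal.ofNat_ne_top]
      exact measure_ball_le_two_mul_measure_inter_affineLocus_pyramid hN hφ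
        (hae.mono fun _ h => h.1) hneg
    rw [← hD.tsum_measure, ← ENNReal.tsum_mul_left]
    exact (ENNReal.tsum_le_tsum hhalf).trans hD.tsum_measure_affineLocus_le

theorem eventually_laminable_of_smulRight {θ : ℝ≥0∞} (hC : ∀ A ∈ U, ‖A‖ ≤ C)
    (hplus : ∀ᶠ A in 𝓝 (ξ + φ.smulRight a), A ∈ U ∧ Laminable μ C U T θ A)
    (hminus : U ∈ 𝓝 (ξ - φ.smulRight a)) :
    ∀ᶠ A in 𝓝 ξ, Laminable μ C U T (θ * 2⁻¹) A := by
  have h₁ := (continuous_add_const (φ.smulRight a)).continuousAt.eventually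
    (eventually_mem_nhds_iff.2 hplus)
  have h₂ := (continuous_sub_right (φ.smulRight a)).continuousAt.eventually
    (eventually_mem_nhds_iff.2 hminus)
  filter_upwards [h₁, h₂] with A hA₁ hA₂
  rw [← zero_add (θ * 2⁻¹)]
  refine Laminable.comp (fun B hB => Laminable.zero hB (hC B hB)) (fun B hB => ?_)
    (laminable_two_inv hC (fun B hB => hB.1) hA₁ hA₂)
  rw [zero_add]
  exact hB.2

theorem eventually_laminable_of_chain (hC : ∀ A ∈ U, ‖A‖ ≤ C) (hU : IsOpen U) (hT : IsOpen T)
    (hTU : T ⊆ U) {J : ℕ} {η : ℕ → V →L[ℝ] W}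
    (hη : ∀ j < J, ∃ (φ : V →L[ℝ] ℝ) (a : W), η j = φ.smulRight a)
    (hminus : ∀ j < J, ξ + ∑ k ∈ Finset.range j, η k - η j ∈ U)
    (hplus : ∀ j < J, ξ + ∑ k ∈ Finset.range j, η k + η j ∈ U)
    (hJ : ξ + ∑ k ∈ Finset.range J, η k ∈ T) :
    ∀ᶠ A in 𝓝 ξ, Laminable μ C U T (2⁻¹ ^ J) A := by
  induction J generalizing ξ η with
  | zero =>
    rw [Finset.sum_range_zero, add_zero] at hJ
    filter_upwards [hT.mem_nhds hJ] with A hA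
    rw [pow_zero]
    exact Laminable.one hTU hA (hC A (hTU hA))
  | succ J ih =>
    have hshift j : ξ + η 0 + ∑ k ∈ Finset.range j, η (k + 1) =
        ξ + ∑ k ∈ Finset.range (j + 1), η k := by
      rw [Finset.sum_range_succ', add_assoc, add_comm (η 0)]
    have htail : ∀ᶠ A in 𝓝 (ξ + η 0), Laminable μ C U T (2⁻¹ ^ J) A := by
      refine ih (fun j hj => hη (j + 1) (Nat.succ_lt_succ hj)) (fun j hj => ?_) (fun j hj => ?_) ?_
      · rw [hshift]
        exact hminus (j + 1) (Nat.succ_lt_succ hj)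
      · rw [hshift]
        exact hplus (j + 1) (Nat.succ_lt_succ hj)
      · rwa [hshift]
    have hplus₀ : ξ + η 0 ∈ U := by simpa using hplus 0 J.succ_pos
    have hminus₀ : ξ - η 0 ∈ U := by simpa using hminus 0 J.succ_pos
    obtain ⟨φ, a, hφa⟩ := hη 0 J.succ_pos
    rw [hφa] at htail hplus₀ hminus₀
    rw [pow_succ]
    exact eventually_laminable_of_smulRight hC ((hU.eventually_mem hplus₀).and htail)
      (hU.mem_nhds hminus₀)

end Lamination

section RankOneChain

open scoped NNReal ENNReal

theorem exists_eq_smulRight_of_finrank_range_le_one {V W : Type*} [NormedAddCommGroup V]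
    [NormedSpace ℝ V] [FiniteDimensional ℝ V] [NormedAddCommGroup W] [NormedSpace ℝ W]
    {A : V →L[ℝ] W} (hA : Module.finrank ℝ (LinearMap.range A.toLinearMap) ≤ 1) :
    ∃ (φ : V →L[ℝ] ℝ) (a : W), A = φ.smulRight a := by
  obtain ⟨⟨a, _⟩, ha⟩ := finrank_le_one_iff.1 hA
  have hspan x : ∃ c : ℝ, c • a = A x := by
    obtain ⟨c, hc⟩ := ha ⟨A x, LinearMap.mem_range_self _ x⟩
    exact ⟨c, congrArg Subtype.val hc⟩
  obtain rfl | ha₀ := eq_or_ne a 0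
  · refine ⟨0, 0, ContinuousLinearMap.ext fun x => ?_⟩
    obtain ⟨c, hc⟩ := hspan x
    simpa using hc.symm
  · obtain ⟨g, hg⟩ := SeparatingDual.exists_eq_one (R := ℝ) ha₀
    refine ⟨g.comp A, a, ContinuousLinearMap.ext fun x => ?_⟩
    obtain ⟨c, hc⟩ := hspan x
    simp [← hc, hg]

variable {N n : ℕ} {E T U : Set (Mat N n)} {ξ : Mat N n} {C : ℝ≥0}

/-- The identification of matrices with the linear maps they define. -/
noncomputable def matEquiv (N n : ℕ) : Mat N n ≃L[ℝ] (Fin n → ℝ) →L[ℝ] Fin N → ℝ :=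
  (Matrix.toLin'.trans LinearMap.toContinuousLinearMap).toContinuousLinearEquiv

theorem matEquiv_apply (x : Fin n → ℝ) : matEquiv N n ξ x = ξ.mulVec x := rfl

theorem matGrad_mem_of_mem_affineLocus {u : (Fin n → ℝ) → Fin N → ℝ} {x : Fin n → ℝ}
    (hx : x ∈ affineLocus u ((matEquiv N n).symm ⁻¹' U)) : matGrad u x ∈ U :=
  fderiv_mem_of_mem_affineLocus hx

/-- `ξ` can be moved into `T` by `J` rank-one steps such that each step, as well as its opposite,
leads to a point of `U`. This is the chain of matrices in condition (H), with each segment replaced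
by its endpoints. -/
def RankOneReachable (U T : Set (Mat N n)) (J : ℕ) (ξ : Mat N n) : Prop :=
  ∃ η : ℕ → Mat N n, (∀ j < J, (η j).rank ≤ 1) ∧
    (∀ j < J, ξ + ∑ k ∈ Finset.range j, η k - η j ∈ U ∧ ξ + ∑ k ∈ Finset.range j, η k + η j ∈ U) ∧
    ξ + ∑ k ∈ Finset.range J, η k ∈ T

theorem RankOneReachable.laminable {J : ℕ} (h : RankOneReachable U T J ξ) (hU : IsOpen U)
    (hT : IsOpen T) (hC : ∀ A ∈ U, ‖matEquiv N n A‖ ≤ C) (hξ : ξ ∈ U) :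
    Laminable volume C ((matEquiv N n).symm ⁻¹' U) ((matEquiv N n).symm ⁻¹' (U ∩ T)) (2⁻¹ ^ J)
      (matEquiv N n ξ) := by
  obtain ⟨η, hη, hηU, hηT⟩ := h
  have hend : ξ + ∑ k ∈ Finset.range J, η k ∈ U := by
    cases J with
    | zero => simpa using hξ
    | succ J =>
      rw [Finset.sum_range_succ, ← add_assoc]
      exact (hηU J J.lt_succ_self).2
  have hcont := (matEquiv N n).symm.continuous
  refine (eventually_laminable_of_chain (η := fun j => matEquiv N n (η j)) (fun A hA => ?_)
    (hU.preimage hcont) ((hU.inter hT).preimage hcont) (preimage_mono inter_subset_left)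
    (fun j hj => exists_eq_smulRight_of_finrank_range_le_one (hη j hj)) (fun j hj => ?_)
    (fun j hj => ?_) ?_).self_of_nhds
  · simpa using hC _ hA
  · simpa using (hηU j hj).1
  · simpa using (hηU j hj).2
  · simpa using And.intro hend hηT

theorem exists_isPerturbation_measure_diff_thickening_le (hU : IsOpen U)
    (hC : ∀ A ∈ U, ‖matEquiv N n A‖ ≤ C) {δ : ℝ} (hδ : 0 < δ) {L : ℕ}
    (hL : ∀ A ∈ U \ thickening δ E, ∃ J ≤ L, RankOneReachable U (thickening δ E) J A)
    {Ω : Set (Fin n → ℝ)} (hΩ : IsOpen Ω) (hμΩ : volume Ω ≠ ∞) (hξ : ξ ∈ U) (b : Fin N → ℝ) :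
    ∃ u, IsPerturbation volume C ((matEquiv N n).symm ⁻¹' U) δ Ω (fun x => ξ.mulVec x + b) u ∧
      volume (Ω \ affineLocus u ((matEquiv N n).symm ⁻¹' (U ∩ thickening δ E))) ≤
        ENNReal.ofReal δ := by
  have hreach : ∀ A ∈ U, ∃ J ≤ L, RankOneReachable U (thickening δ E) J A := fun A hA => by
    by_cases hAE : A ∈ thickening δ E
    · exact ⟨0, L.zero_le, 0, by simp, by simp, by simpa using hAE⟩
    · exact hL A ⟨hA, hAE⟩
  have hlam : ∀ A ∈ (matEquiv N n).symm ⁻¹' U, Laminable volume C ((matEquiv N n).symm ⁻¹' U)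
      ((matEquiv N n).symm ⁻¹' (U ∩ thickening δ E)) (2⁻¹ ^ L) A := fun A hA => by
    obtain ⟨J, hJ, h⟩ := hreach _ hA
    have hlamJ := (h.laminable hU isOpen_thickening hC hA).mono
      (pow_le_pow_right_of_le_one' (ENNReal.inv_le_one.2 one_le_two) hJ)
    rwa [ContinuousLinearEquiv.apply_symm_apply] at hlamJ
  refine Laminable.exists_isPerturbation_measure_diff_le (ξ := matEquiv N n ξ) (fun A hA => ?_)
    (preimage_mono inter_subset_left) (pow_ne_zero L (ENNReal.inv_ne_zero.2 ENNReal.ofNat_ne_top))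
    (pow_le_one' (ENNReal.inv_le_one.2 one_le_two) L) hlam (by simpa using hξ) hΩ hμΩ b hδ
    (ENNReal.ofReal_pos.2 hδ).ne'
  simpa using hC _ hA

end RankOneChain

section Relaxation

open Topology
open scoped NNReal ENNReal

theorem integral_le_mul_measureReal_add {X : Type*} [MeasurableSpace X] {μ : Measure X}
    [IsFiniteMeasure μ] {f : X → ℝ} {G : Set X} {δ R : ℝ} (hG : MeasurableSet G) (hδ : 0 ≤ δ)
    (hf : 0 ≤ᵐ[μ] f) (hfδ : ∀ x ∈ G, f x ≤ δ) (hfR : ∀ᵐ x ∂μ, f x ≤ R) :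
    ∫ x, f x ∂μ ≤ δ * μ.real univ + R * μ.real Gᶜ := by
  have hint : Integrable (Gᶜ.indicator fun _ => R) μ := (integrable_const R).indicator hG.compl
  calc ∫ x, f x ∂μ ≤ ∫ x, (δ + Gᶜ.indicator (fun _ => R) x) ∂μ := by
        refine integral_mono_of_nonneg hf ((integrable_const δ).add hint) ?_
        filter_upwards [hfR] with x hx
        by_cases hxG : x ∈ G
        · simpa [hxG] using hfδ x hxG
        · simpa [hxG] using hx.trans (le_add_of_nonneg_left hδ)
    _ = δ * μ.real univ + R * μ.real Gᶜ := by
        rw [integral_add (integrable_const δ) hint, integral_indicator_const _ hG.compl,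
          integral_const, smul_eq_mul, smul_eq_mul, mul_comm δ, mul_comm R]

variable {N n : ℕ} {E U : Set (Mat N n)}

theorem piecewiseAffineOn_of_measure_diff_affineLocus_eq_zero {Ω : Set (Fin n → ℝ)}
    {u : (Fin n → ℝ) → Fin N → ℝ} {S : Set ((Fin n → ℝ) →L[ℝ] Fin N → ℝ)} (hΩ : IsOpen Ω)
    (hu : Continuous u) (h : volume (Ω \ affineLocus u S) = 0) : PiecewiseAffineOn u Ω := by
  obtain ⟨I, hI, -, hD⟩ := exists_isOpenTiling_inter_affinePiece hΩ h
  have : Countable I := hI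
  have hpiece (p : I) : AffineOn u (Ω ∩ affinePiece u p) := by
    refine ⟨(matEquiv N n).symm p.1.1, p.1.2, fun x hx => ?_⟩
    rw [← matEquiv_apply, ContinuousLinearEquiv.apply_symm_apply]
    exact eqOn_affinePiece hx.2
  obtain ⟨P, hP, hPu⟩ := hD.exists_nat hpiece ⟨0, 0, fun x hx => hx.elim⟩
  exact ⟨hu.continuousOn, P, hP.isOpen, hP.subset, fun _ _ hkl => hP.disjoint hkl, hP.null, hPu⟩

theorem ae_matGrad_mem {Ω : Set (Fin n → ℝ)} {u : (Fin n → ℝ) → Fin N → ℝ} (hΩ : IsOpen Ω)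
    (h : volume (Ω \ affineLocus u ((matEquiv N n).symm ⁻¹' U)) = 0) :
    ∀ᵐ x ∂volume.restrict Ω, matGrad u x ∈ U :=
  (ae_restrict_iff' hΩ.measurableSet).2 ((ae_le_set.2 h).mono fun _ hx hxΩ =>
    matGrad_mem_of_mem_affineLocus (hx hxΩ))

theorem setIntegral_infDist_matGrad_le {Ω : Set (Fin n → ℝ)} {u : (Fin n → ℝ) → Fin N → ℝ}
    {R δ : ℝ} (hR₀ : 0 ≤ R) (hR : ∀ A ∈ U, infDist A E ≤ R) (hΩ : IsOpen Ω)
    (hμΩ : volume Ω ≠ ∞) (hδ : 0 ≤ δ)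
    (hu : volume (Ω \ affineLocus u ((matEquiv N n).symm ⁻¹' U)) = 0)
    (huE : volume (Ω \ affineLocus u ((matEquiv N n).symm ⁻¹' (U ∩ thickening δ E))) ≤
      ENNReal.ofReal δ) :
    ∫ x in Ω, infDist (matGrad u x) E ≤ δ * (volume.real Ω + R) := by
  set G := affineLocus u ((matEquiv N n).symm ⁻¹' (U ∩ thickening δ E))
  have hGE : ∀ x ∈ G, infDist (matGrad u x) E ≤ δ := fun x hx =>
    ENNReal.toReal_le_of_le_ofReal hδ (mem_thickening_iff_infEDist_lt.1
      (matGrad_mem_of_mem_affineLocus hx).2).le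
  have hGΩ : volume.real (Ω \ G) ≤ δ := ENNReal.toReal_le_of_le_ofReal hδ huE
  have : IsFiniteMeasure (volume.restrict Ω) := isFiniteMeasure_restrict.2 hμΩ
  calc ∫ x in Ω, infDist (matGrad u x) E
      ≤ δ * (volume.restrict Ω).real univ + R * (volume.restrict Ω).real Gᶜ :=
        integral_le_mul_measureReal_add isOpen_affineLocus.measurableSet hδ
          (ae_of_all _ fun _ => infDist_nonneg) hGE
          ((ae_matGrad_mem hΩ hu).mono fun _ hx => hR _ hx)
    _ = δ * volume.real Ω + R * volume.real (Ω \ G) := by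
        rw [measureReal_restrict_apply MeasurableSet.univ, univ_inter,
          measureReal_restrict_apply isOpen_affineLocus.measurableSet.compl, inter_comm,
          ← sdiff_eq]
    _ ≤ δ * (volume.real Ω + R) := by
        rw [mul_add, mul_comm δ R]
        gcongr

theorem exists_forall_infDist_le {X : Type*} [PseudoMetricSpace X] {s : Set X}
    (hs : Bornology.IsBounded s) (t : Set X) : ∃ R, 0 ≤ R ∧ ∀ x ∈ s, infDist x t ≤ R := by
  obtain rfl | ⟨y, hy⟩ := t.eq_empty_or_nonempty
  · exact ⟨0, le_rfl, fun x _ => infDist_empty.le⟩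
  · obtain ⟨R, hR⟩ := hs.subset_closedBall y
    exact ⟨max R 0, le_max_right _ _, fun x hx =>
      (infDist_le_dist_of_mem hy).trans ((hR hx).trans (le_max_left _ _))⟩

theorem exists_forall_norm_matEquiv_le (hU : Bornology.IsBounded U) :
    ∃ C : ℝ≥0, ∀ A ∈ U, ‖matEquiv N n A‖ ≤ C := by
  obtain ⟨C, hC⟩ := isBounded_iff_forall_norm_le.1 ((matEquiv N n).lipschitz.isBounded_image hU)
  exact ⟨C.toNNReal, fun A hA => (hC _ (mem_image_of_mem _ hA)).trans (Real.le_coe_toNNReal C)⟩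

theorem stmt3_general (hUo : IsOpen U) (hUb : Bornology.IsBounded U)
    (hH : ∀ δ > 0, ∃ L : ℕ, ∀ ξ ∈ U \ thickening δ E,
      ∃ J ≤ L, RankOneReachable U (thickening δ E) J ξ) : HasRelaxationProperty U E := by
  intro Ω hΩ hΩb ξ hξ b
  have hμΩ : volume Ω ≠ ∞ := hΩb.measure_lt_top.ne
  obtain ⟨C, hC⟩ := exists_forall_norm_matEquiv_le hUb
  obtain ⟨R, hR₀, hR⟩ := exists_forall_infDist_le hUb E
  let δ (ν : ℕ) : ℝ := 1 / (ν + 1)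
  have hδ₀ ν : 0 < δ ν := Nat.one_div_pos_of_nat
  have hδ : Tendsto δ atTop (𝓝 0) := tendsto_one_div_add_atTop_nhds_zero_nat
  have happrox ν : ∃ u, IsPerturbation volume C ((matEquiv N n).symm ⁻¹' U) (δ ν) Ω
      (fun x => ξ.mulVec x + b) u ∧ volume (Ω \ affineLocus u
        ((matEquiv N n).symm ⁻¹' (U ∩ thickening (δ ν) E))) ≤ ENNReal.ofReal (δ ν) := by
    obtain ⟨L, hL⟩ := hH (δ ν) (hδ₀ ν)
    exact exists_isPerturbation_measure_diff_thickening_le hUo hC (hδ₀ ν) hL hΩ hμΩ hξ b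
  choose u hu huE using happrox
  have hbdry ν : ∀ x ∈ frontier Ω, u ν x = ξ.mulVec x + b := fun x hx =>
    (hu ν).eqOn_compl (disjoint_left.1 (disjoint_frontier_iff_isOpen.2 hΩ) hx)
  have hint ν : ∫ x in Ω, infDist (matGrad (u ν) x) E ≤ δ ν * (volume.real Ω + R) :=
    setIntegral_infDist_matGrad_le hR₀ hR hΩ hμΩ (hδ₀ ν).le (hu ν).null (huE ν)
  refine ⟨u, fun ν => piecewiseAffineOn_of_measure_diff_affineLocus_eq_zero hΩ
      (hu ν).lipschitzWith.continuous (hu ν).null,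
    fun ν => ⟨⟨C, (hu ν).lipschitzWith.lipschitzOnWith⟩, hbdry ν⟩,
    fun ν => (ae_matGrad_mem hΩ (hu ν).null).mono fun _ => Or.inr,
    ⟨C, fun ν => (hu ν).lipschitzWith.lipschitzOnWith⟩, ?_, ?_⟩
  · refine tendstoUniformlyOn_iff.2 fun ε hε => ?_
    filter_upwards [hδ.eventually_lt_const hε] with ν hν x _
    rw [dist_comm]
    exact ((hu ν).dist_le x).trans_lt hν
  · refine squeeze_zero (fun ν => integral_nonneg fun _ => infDist_nonneg) hint ?_
    simpa only [zero_mul] using hδ.mul_const (volume.real Ω + R)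

end Relaxation

theorem stmt3 {N n : ℕ} (E K : Set (Mat N n)) (hE : IsCompact E)
    (hK : Bornology.IsBounded K)
    (hH : ∀ δ > 0, ∃ L : ℕ, ∀ ξ ∈ interior K \ Metric.thickening δ E,
      ∃ J : ℕ, J ≤ L ∧ ∃ η : ℕ → Mat N n,
        (∀ j < J, (η j).rank = 1) ∧
        (∀ j < J, segment ℝ (ξ + ∑ k ∈ Finset.range j, η k - η j)
            (ξ + ∑ k ∈ Finset.range j, η k + η j) ⊆ interior K) ∧
        ξ + ∑ k ∈ Finset.range J, η k ∈ Metric.thickening δ E) :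
    HasRelaxationProperty (interior K) E := by
  refine stmt3_general isOpen_interior (hK.subset interior_subset) fun δ hδ => ?_
  obtain ⟨L, hL⟩ := hH δ hδ
  refine ⟨L, fun ξ hξ => ?_⟩
  obtain ⟨J, hJ, η, hη, hseg, hend⟩ := hL ξ hξ
  exact ⟨J, hJ, η, fun j hj => (hη j hj).le,
    fun j hj => ⟨hseg j hj (left_mem_segment ℝ _ _), hseg j hj (right_mem_segment ℝ _ _)⟩, hend⟩

end Statements
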